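/- Let R be the commutative ring ℤ[b, U, x, y]/(2U, 2x, U², xy, Ux, Uy, y², x² − bU). Let f : ℤ[p₁, w, y₁] → R be the ring homomorphism determined by p₁ ↦ b, w ↦ x, y₁ ↦ y. Then the kernel of f is the ideal of ℤ[p₁, w, y₁] generated by 2w, y₁², wy₁, and w³. -/

import Mathlib

/-!
Write `J = (2w, y₁², wy₁, w³)`. The four generators of `J` vanish in the target; for `w³` one uses
`x³ = b(Ux) = 0`. Conversely, modulo `J` every polynomial has the form
`A(p₁) + B(p₁) y₁ + C(p₁) w + D(p₁) w²` (`exists_normal_form`), where only the parities of the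
coefficients of `C` and `D` matter. If such an element lies in the kernel, then it also dies under
every homomorphism out of the target ring (`aeval_mem_of_mem_ker`), and two of these suffice:

* `b ↦ s`, `U, x ↦ 0`, `y ↦ t` into `ℤ[s][t]/(t²)` shows `A = B = 0`;
* `b ↦ s`, `U ↦ st²`, `x ↦ st`, `y ↦ 0` into `𝔽₂[s][t]/(t³)` sends the rest to
  `s C(s) t + s² D(s) t²`, so `C` and `D` vanish modulo `2`.
-/

open MvPolynomial

/-- The ideal `(2U, 2x, U², xy, Ux, Uy, y², x² - bU)` of `ℤ[b, U, x, y]`, where the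
variables are numbered `b = X 0`, `U = X 1`, `x = X 2`, `y = X 3`. -/
noncomputable def relIdeal12 : Ideal (MvPolynomial (Fin 4) ℤ) :=
  Ideal.span {2 * X 1, 2 * X 2, X 1 ^ 2, X 2 * X 3, X 1 * X 2, X 1 * X 3,
    X 3 ^ 2, X 2 ^ 2 - X 0 * X 1}

/-- The ring homomorphism `f : ℤ[p₁, w, y₁] → ℤ[b, U, x, y]/relIdeal12` given by `p₁ ↦ b`,
`w ↦ x`, `y₁ ↦ y`, where the source variables are numbered `p₁ = X 0`, `w = X 1`,
`y₁ = X 2`. -/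
noncomputable def f12 :
    MvPolynomial (Fin 3) ℤ →ₐ[ℤ] (MvPolynomial (Fin 4) ℤ ⧸ relIdeal12) :=
  aeval ![Ideal.Quotient.mk relIdeal12 (X 0),
    Ideal.Quotient.mk relIdeal12 (X 2),
    Ideal.Quotient.mk relIdeal12 (X 3)]

/-- The ideal `(2w, y₁², wy₁, w³)` of `ℤ[p₁, w, y₁]`. -/
noncomputable def kerIdeal : Ideal (MvPolynomial (Fin 3) ℤ) :=
  Ideal.span {2 * X 1, X 2 ^ 2, X 1 * X 2, X 1 ^ 3}

lemma two_w_mem : 2 * X 1 ∈ kerIdeal := Ideal.subset_span (by simp)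

lemma y_sq_mem : X 2 ^ 2 ∈ kerIdeal := Ideal.subset_span (by simp)

lemma w_mul_y_mem : X 1 * X 2 ∈ kerIdeal := Ideal.subset_span (by simp)

lemma w_cube_mem : X 1 ^ 3 ∈ kerIdeal := Ideal.subset_span (by simp)

lemma f12_eq_mk (p : MvPolynomial (Fin 3) ℤ) :
    f12 p = Ideal.Quotient.mk relIdeal12 (aeval ![X 0, X 2, X 3] p) := by
  have h : f12 = (Ideal.Quotient.mkₐ ℤ relIdeal12).comp (aeval ![X 0, X 2, X 3]) := by
    ext i
    fin_cases i <;> simp [f12]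
  rw [h]
  rfl

/-- If `b, U, x, y ∈ S` satisfy the defining relations of the target of `f12` modulo `I`, then
`ℤ[p₁, w, y₁] → S / I`, `p₁ ↦ b`, `w ↦ x`, `y₁ ↦ y`, factors through `f12` and hence kills its
kernel. -/
lemma aeval_mem_of_mem_ker {S : Type*} [CommRing S] [Algebra ℤ S] (I : Ideal S) (b U x y : S)
    (h1 : 2 * U ∈ I) (h2 : 2 * x ∈ I) (h3 : U ^ 2 ∈ I) (h4 : x * y ∈ I) (h5 : U * x ∈ I)
    (h6 : U * y ∈ I) (h7 : y ^ 2 ∈ I) (h8 : x ^ 2 - b * U ∈ I)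
    {p : MvPolynomial (Fin 3) ℤ} (hp : f12 p = 0) : aeval ![b, x, y] p ∈ I := by
  have hle : relIdeal12 ≤ I.comap (aeval (R := ℤ) ![b, U, x, y]) := by
    rw [relIdeal12, Ideal.span_le]
    rintro q (rfl | rfl | rfl | rfl | rfl | rfl | rfl | rfl) <;> simpa
  rw [f12_eq_mk, Ideal.Quotient.eq_zero_iff_mem] at hp
  have h : (aeval (R := ℤ) ![b, U, x, y]).comp (aeval (R := ℤ) ![X 0, X 2, X 3])
      = aeval ![b, x, y] := by
    ext i
    fin_cases i <;> simp
  rw [← h]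
  exact hle hp

/-- The polynomial `A(p₁) + B(p₁) y₁ + C(p₁) w + D(p₁) w²`. -/
noncomputable def normalForm (A B C D : Polynomial ℤ) : MvPolynomial (Fin 3) ℤ :=
  Polynomial.aeval (X 0) A + Polynomial.aeval (X 0) B * X 2
    + Polynomial.aeval (X 0) C * X 1 + Polynomial.aeval (X 0) D * X 1 ^ 2

lemma exists_normal_form (p : MvPolynomial (Fin 3) ℤ) :
    ∃ A B C D : Polynomial ℤ, p - normalForm A B C D ∈ kerIdeal := by
  induction p using MvPolynomial.induction_on with
  | C a => exact ⟨Polynomial.C a, 0, 0, 0, by simp [normalForm]⟩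
  | add p q hp hq =>
    obtain ⟨A, B, C, D, h⟩ := hp
    obtain ⟨A', B', C', D', h'⟩ := hq
    refine ⟨A + A', B + B', C + C', D + D', ?_⟩
    convert add_mem h h' using 1
    simp only [normalForm, map_add]
    ring
  | mul_X p i hp =>
    obtain ⟨A, B, C, D, h⟩ := hp
    have hm := kerIdeal.mul_mem_right (X i) h
    fin_cases i
    · refine ⟨A * Polynomial.X, B * Polynomial.X, C * Polynomial.X, D * Polynomial.X, ?_⟩
      convert hm using 1
      simp only [normalForm, map_mul, Polynomial.aeval_X, Fin.zero_eta]
      ring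
    · refine ⟨0, 0, A, C, ?_⟩
      convert add_mem hm (add_mem
        (kerIdeal.mul_mem_left (Polynomial.aeval (X 0) B) w_mul_y_mem)
        (kerIdeal.mul_mem_left (Polynomial.aeval (X 0) D) w_cube_mem)) using 1
      simp only [normalForm, map_zero, Fin.mk_one]
      ring
    · refine ⟨0, A, 0, 0, ?_⟩
      convert add_mem hm (add_mem
        (kerIdeal.mul_mem_left (Polynomial.aeval (X 0) B) y_sq_mem)
        (kerIdeal.mul_mem_left (Polynomial.aeval (X 0) C + Polynomial.aeval (X 0) D * X 1)
          w_mul_y_mem)) using 1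
      simp only [normalForm, map_zero, Fin.reduceFinMk]
      ring

lemma aeval_C_X {R : Type*} [CommRing R] (A : Polynomial ℤ) :
    Polynomial.aeval (Polynomial.C Polynomial.X : Polynomial (Polynomial R)) A
      = Polynomial.C (A.map (Int.castRingHom R)) := by
  induction A using Polynomial.induction_on' with
  | add p q hp hq => simp [hp, hq]
  | monomial n a => simp [← Polynomial.C_mul_X_pow_eq_monomial]

lemma aeval_normalForm {S : Type*} [CommRing S] [Algebra ℤ S] (b x y : S) (A B C D : Polynomial ℤ) :
    aeval ![b, x, y] (normalForm A B C D) = Polynomial.aeval b A + Polynomial.aeval b B * y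
      + Polynomial.aeval b C * x + Polynomial.aeval b D * x ^ 2 := by
  simp [normalForm, ← Polynomial.aeval_algHom_apply]

/-- A polynomial in `p₁` with even coefficients multiplies `w` into `(2w)`. -/
lemma aeval_mul_w_mem {C : Polynomial ℤ} (hC : C.map (Int.castRingHom (ZMod 2)) = 0) :
    Polynomial.aeval (X 0) C * X 1 ∈ kerIdeal := by
  have h2 : Polynomial.C (2 : ℤ) ∣ C := by
    rw [Polynomial.C_dvd_iff_dvd_coeff]
    intro i
    have h := congrArg (fun q => Polynomial.coeff q i) hC
    simpa [Polynomial.coeff_map, ZMod.intCast_zmod_eq_zero_iff_dvd,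
      ZMod.intCast_eq_zero_iff_even, even_iff_two_dvd] using h
  obtain ⟨E, rfl⟩ := h2
  convert kerIdeal.mul_mem_left (Polynomial.aeval (X 0) E) two_w_mem using 1
  simp [map_ofNat]
  ring

/-- The first two coefficients of a normal form in the kernel vanish, as is detected by
`b ↦ s`, `U, x ↦ 0`, `y ↦ t` with values in `ℤ[s][t]/(t²)`. -/
lemma normalForm_ker_fst {A B C D : Polynomial ℤ} (h : f12 (normalForm A B C D) = 0) :
    A = 0 ∧ B = 0 := by
  have hm := aeval_mem_of_mem_ker (Ideal.span {(Polynomial.X : Polynomial (Polynomial ℤ)) ^ 2})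
    (Polynomial.C Polynomial.X) 0 0 Polynomial.X (by simp) (by simp) (by simp) (by simp)
    (by simp) (by simp) (Ideal.mem_span_singleton_self _) (by simp) h
  rw [Ideal.mem_span_singleton, Polynomial.X_pow_dvd_iff, aeval_normalForm] at hm
  simp only [aeval_C_X] at hm
  have h0 := hm 0 (by norm_num)
  have h1 := hm 1 (by norm_num)
  simp at h0 h1
  exact ⟨h0, h1⟩

/-- The last two coefficients of a normal form in the kernel vanish modulo `2`, as is detected by
`b ↦ s`, `U ↦ st²`, `x ↦ st`, `y ↦ 0` with values in `𝔽₂[s][t]/(t³)`. -/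
lemma normalForm_ker_snd {C D : Polynomial ℤ} (h : f12 (normalForm 0 0 C D) = 0) :
    C.map (Int.castRingHom (ZMod 2)) = 0 ∧ D.map (Int.castRingHom (ZMod 2)) = 0 := by
  have two : (2 : Polynomial (Polynomial (ZMod 2))) = 0 := CharTwo.two_eq_zero
  let s : Polynomial (Polynomial (ZMod 2)) := Polynomial.C Polynomial.X
  let t : Polynomial (Polynomial (ZMod 2)) := Polynomial.X
  have hm := aeval_mem_of_mem_ker (Ideal.span {t ^ 3}) s (s * t ^ 2) (s * t) 0
    (by simp [two]) (by simp [two])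
    (Ideal.mem_span_singleton.2 ⟨s ^ 2 * t, by ring⟩) (by simp)
    (Ideal.mem_span_singleton.2 ⟨s ^ 2, by ring⟩) (by simp) (by simp)
    (Ideal.mem_span_singleton.2 ⟨0, by ring⟩) h
  rw [Ideal.mem_span_singleton, Polynomial.X_pow_dvd_iff, aeval_normalForm] at hm
  have key : ∀ c d : Polynomial (ZMod 2), Polynomial.C c * (s * t) + Polynomial.C d * (s * t) ^ 2
      = Polynomial.C (c * Polynomial.X) * Polynomial.X ^ 1
        + Polynomial.C (d * Polynomial.X ^ 2) * Polynomial.X ^ 2 := by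
    intro c d
    simp only [s, t, map_mul, map_pow]
    ring
  simp only [s, aeval_C_X, map_zero, zero_mul, zero_add] at hm
  simp only [s] at key
  simp only [key, Polynomial.coeff_add, Polynomial.coeff_C_mul_X_pow] at hm
  have h1 := hm 1 (by norm_num)
  have h2 := hm 2 (by norm_num)
  simp at h1 h2
  exact ⟨h1, h2⟩

lemma kerIdeal_le_ker : kerIdeal ≤ RingHom.ker f12 := by
  rw [kerIdeal, Ideal.span_le]
  rintro p (rfl | rfl | rfl | rfl) <;>
    rw [SetLike.mem_coe, RingHom.mem_ker, f12_eq_mk, Ideal.Quotient.eq_zero_iff_mem]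
  · exact Ideal.subset_span (by simp [map_ofNat])
  · exact Ideal.subset_span (by simp)
  · exact Ideal.subset_span (by simp)
  · have h1 : X 2 ^ 2 - X 0 * X 1 ∈ relIdeal12 := Ideal.subset_span (by simp)
    have h2 : X 1 * X 2 ∈ relIdeal12 := Ideal.subset_span (by simp)
    convert add_mem (relIdeal12.mul_mem_left (X 2) h1) (relIdeal12.mul_mem_left (X 0) h2) using 1
    simp
    ring

/-- The kernel of `f12` is the ideal `(2w, y₁², wy₁, w³)`. -/
theorem ker_f12 :
    RingHom.ker f12 =
      Ideal.span {2 * X 1, X 2 ^ 2, X 1 * X 2, X 1 ^ 3} := by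
  refine le_antisymm (fun p hp => ?_) kerIdeal_le_ker
  change p ∈ kerIdeal
  obtain ⟨A, B, C, D, h⟩ := exists_normal_form p
  have hN : f12 (normalForm A B C D) = 0 := by
    have h0 := kerIdeal_le_ker h
    rw [RingHom.mem_ker] at hp h0
    simpa [hp] using h0
  obtain ⟨rfl, rfl⟩ := normalForm_ker_fst hN
  obtain ⟨hC, hD⟩ := normalForm_ker_snd hN
  convert add_mem h (add_mem (aeval_mul_w_mem hC)
    (kerIdeal.mul_mem_right (X 1) (aeval_mul_w_mem hD))) using 1
  simp only [normalForm, map_zero]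
  ring
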